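/- arXiv:2603.05007 — 2 statements merged into one kernel-verified Lean document; each statement's English description precedes it below -/
import Mathlib

section
/- Let V be a finite set and F a finite family of n four-element subsets of V such that every element of V belongs to exactly 12 members of F and every pair of distinct elements of V belongs to at most 2 members of F. Then for every pairing p of V there exists a transversal S of p such that the number of e ∈ F with e ∩ S ≠ ∅ is at most 23n/24, i.e., 24·|{e ∈ F : e ∩ S ≠ ∅}| ≤ 23n. -/
open Finset

/-!
Choose a transversal `S` uniformly at random. A set `e` containing no pair `{v, p v}` is missed by
`S` with probability `2 ^ (-#e)`: swapping the two elements of one pair matches the transversals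
that contain `v` with those that do not. Let the `n` sets in `F` have size at most `k`, let every
point lie in at least `ℓ` of them, and let every pair `{v, p v}` lie in at most `q` of them. Then
at most `q |V| / 2 ≤ q k n / (2 ℓ)` of the sets contain a pair, so the expected number of missed
sets is at least `2 ^ (-k) (1 - q k / (2 ℓ)) n`, which is `n / 24` for `k = 4`, `ℓ = 12`, `q = 2`.
-/

section Pairing

variable {V : Type*} [Fintype V] [DecidableEq V] {p : V → V}

/-- The transversals of the pairing `p`: the sets with exactly one element of each `{v, p v}`.
They form the sample space of the averaging argument. -/
def transversals (p : V → V) : Finset (Finset V) :=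
  {S | ∀ v, v ∈ S ↔ p v ∉ S}

lemma mem_transversals {S : Finset V} : S ∈ transversals p ↔ ∀ v, v ∈ S ↔ p v ∉ S := by
  simp [transversals]

lemma transversals_nonempty (hp : p.Involutive) (hne : ∀ v, p v ≠ v) :
    (transversals p).Nonempty := by
  classical
  refine ⟨univ.filter fun v ↦ WellOrderingRel v (p v), mem_transversals.2 fun v ↦ ?_⟩
  simp only [mem_filter_univ, hp v]
  exact ⟨asymm, fun h ↦ (trichotomous_of WellOrderingRel v (p v)).resolve_right
    (not_or.2 ⟨(hne v).symm, h⟩)⟩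

lemma symmDiff_pair_mem_transversals (hp : p.Involutive) {S : Finset V}
    (hS : S ∈ transversals p) (v : V) : symmDiff S {v, p v} ∈ transversals p := by
  refine mem_transversals.2 fun w ↦ ?_
  have hpair : p w ∈ ({v, p v} : Finset V) ↔ w ∈ ({v, p v} : Finset V) := by
    simp only [mem_insert, mem_singleton, hp.eq_iff, hp v, or_comm]
  have hw := mem_transversals.1 hS w
  simp only [mem_symmDiff, hpair]
  tauto

lemma card_transversals_disjoint_mem_eq_notMem (hp : p.Involutive) {e : Finset V} {v : V}
    (hv : v ∉ e) (hpv : p v ∉ e) :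
    #{S ∈ transversals p | Disjoint e S ∧ v ∈ S} =
      #{S ∈ transversals p | Disjoint e S ∧ v ∉ S} := by
  have hdisj : Disjoint e {v, p v} := by simp [hv, hpv]
  refine card_nbij' (symmDiff · {v, p v}) (symmDiff · {v, p v}) ?_ ?_
    (fun S _ ↦ symmDiff_symmDiff_cancel_right _ S) (fun S _ ↦ symmDiff_symmDiff_cancel_right _ S)
  all_goals
    intro S hS
    obtain ⟨hS, heS, hvS⟩ := mem_filter.1 hS
    refine mem_filter.2 ⟨symmDiff_pair_mem_transversals hp hS v, ?_, by simp [mem_symmDiff, hvS]⟩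
    exact (heS.sup_right hdisj).mono_right symmDiff_le_sup

lemma two_mul_card_transversals_disjoint_insert (hp : p.Involutive) {e : Finset V} {v : V}
    (hv : v ∉ e) (hpv : p v ∉ e) :
    2 * #{S ∈ transversals p | Disjoint (insert v e) S} =
      #{S ∈ transversals p | Disjoint e S} := by
  have hsplit := card_filter_add_card_filter_not (s := {S ∈ transversals p | Disjoint e S}) (v ∈ ·)
  simp only [filter_filter, card_transversals_disjoint_mem_eq_notMem hp hv hpv] at hsplit
  simp only [disjoint_insert_left, and_comm, two_mul, ← hsplit]

lemma two_pow_card_mul_card_transversals_disjoint (hp : p.Involutive) {e : Finset V}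
    (he : ∀ v ∈ e, p v ∉ e) :
    2 ^ #e * #{S ∈ transversals p | Disjoint e S} = #(transversals p) := by
  induction e using Finset.induction_on with
  | empty => simp
  | insert v e hv ih =>
    have hpv : p v ∉ e := fun h ↦ he v (mem_insert_self v e) (mem_insert_of_mem h)
    have he' : ∀ w ∈ e, p w ∉ e := fun w hw h ↦
      he w (mem_insert_of_mem hw) (mem_insert_of_mem h)
    rw [card_insert_of_notMem hv, pow_succ, mul_assoc,
      two_mul_card_transversals_disjoint_insert hp hv hpv, ih he']

lemma exists_mem_transversals_card_le_two_pow_mul (hp : p.Involutive) (hne : ∀ v, p v ≠ v)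
    {k : ℕ} {G : Finset (Finset V)} (hk : ∀ e ∈ G, #e ≤ k) (hG : ∀ e ∈ G, ∀ v ∈ e, p v ∉ e) :
    ∃ S ∈ transversals p, #G ≤ 2 ^ k * #{e ∈ G | Disjoint e S} := by
  refine exists_le_of_sum_le (transversals_nonempty hp hne) ?_
  have hedge : ∀ e ∈ G, #(transversals p) ≤ 2 ^ k * #{S ∈ transversals p | Disjoint e S} := by
    intro e he
    rw [← two_pow_card_mul_card_transversals_disjoint hp (hG e he)]
    gcongr
    exacts [one_le_two, hk e he]
  calc ∑ _S ∈ transversals p, #G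
      = ∑ _e ∈ G, #(transversals p) := by simp only [sum_const, smul_eq_mul, mul_comm]
    _ ≤ ∑ e ∈ G, 2 ^ k * #{S ∈ transversals p | Disjoint e S} := sum_le_sum hedge
    _ = ∑ S ∈ transversals p, 2 ^ k * #{e ∈ G | Disjoint e S} := by
      simp only [← mul_sum]
      exact congrArg _ (sum_card_bipartiteAbove_eq_sum_card_bipartiteBelow (Disjoint · ·))

lemma card_filter_contains_pair_mul_two_le (hp : p.Involutive) (hne : ∀ v, p v ≠ v)
    {q : ℕ} {F : Finset (Finset V)} (hq : ∀ v, #{e ∈ F | v ∈ e ∧ p v ∈ e} ≤ q) :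
    #{e ∈ F | ∃ v ∈ e, p v ∈ e} * 2 ≤ Fintype.card V * q := by
  refine card_mul_le_card_mul (fun e v ↦ v ∈ e ∧ p v ∈ e) (fun e he ↦ ?_) fun v _ ↦ ?_
  · obtain ⟨v, hv, hpv⟩ := (mem_filter.1 he).2
    rw [← card_pair (hne v).symm]
    refine card_le_card (insert_subset ?_ (singleton_subset_iff.2 ?_)) <;>
      simp [bipartiteAbove, hp v, hv, hpv]
  · exact (card_le_card (filter_subset_filter _ (filter_subset _ F))).trans (hq v)

end Pairing

section Counting

variable {V : Type*} [Finite V] [DecidableEq V] {p : V → V}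

lemma two_mul_mul_card_filter_contains_pair_le (hp : p.Involutive) (hne : ∀ v, p v ≠ v)
    {k ℓ q : ℕ} {F : Finset (Finset V)} (hk : ∀ e ∈ F, #e ≤ k) (hℓ : ∀ v, ℓ ≤ #{e ∈ F | v ∈ e})
    (hq : ∀ v, #{e ∈ F | v ∈ e ∧ p v ∈ e} ≤ q) :
    2 * ℓ * #{e ∈ F | ∃ v ∈ e, p v ∈ e} ≤ q * k * #F := by
  cases nonempty_fintype V
  have hdegree : Fintype.card V * ℓ ≤ #F * k :=
    (le_sum_card hℓ).trans (sum_le_card_nsmul F card k hk)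
  calc 2 * ℓ * #{e ∈ F | ∃ v ∈ e, p v ∈ e}
      = ℓ * (#{e ∈ F | ∃ v ∈ e, p v ∈ e} * 2) := by ring
    _ ≤ ℓ * (Fintype.card V * q) :=
      Nat.mul_le_mul_left ℓ (card_filter_contains_pair_mul_two_le hp hne hq)
    _ = Fintype.card V * ℓ * q := by ring
    _ ≤ #F * k * q := Nat.mul_le_mul_right q hdegree
    _ = q * k * #F := by ring

/-- The bound `(1 - 2 ^ (-k) * (1 - q * k / (2 * ℓ))) * #F` on the number of sets met by `S`,
cleared of denominators and subtraction. -/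
theorem rhombus_s1_pairing_upper_general (hp : p.Involutive) (hne : ∀ v, p v ≠ v)
    {k ℓ q : ℕ} {F : Finset (Finset V)} (hk : ∀ e ∈ F, #e ≤ k) (hℓ : ∀ v, ℓ ≤ #{e ∈ F | v ∈ e})
    (hq : ∀ v, #{e ∈ F | v ∈ e ∧ p v ∈ e} ≤ q) :
    ∃ S : Finset V, (∀ v, v ∈ S ↔ p v ∉ S) ∧
      2 * ℓ * (2 ^ k * #{e ∈ F | (e ∩ S).Nonempty} + #F) ≤ (2 * ℓ * 2 ^ k + q * k) * #F := by
  cases nonempty_fintype V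
  obtain ⟨S, hS, hmissed⟩ := exists_mem_transversals_card_le_two_pow_mul hp hne
    (G := {e ∈ F | ¬∃ v ∈ e, p v ∈ e}) (fun e he ↦ hk e (mem_of_mem_filter e he))
    (fun e he v hv hpv ↦ (mem_filter.1 he).2 ⟨v, hv, hpv⟩)
  refine ⟨S, mem_transversals.1 hS, ?_⟩
  have hmono : #{e ∈ {e ∈ F | ¬∃ v ∈ e, p v ∈ e} | Disjoint e S} ≤ #{e ∈ F | Disjoint e S} :=
    card_le_card (filter_subset_filter _ (filter_subset _ F))
  have hpairs := two_mul_mul_card_filter_contains_pair_le hp hne hk hℓ hq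
  have hpair_or_not := card_filter_add_card_filter_not (s := F) fun e ↦ ∃ v ∈ e, p v ∈ e
  have hmissed_or_met := card_filter_add_card_filter_not (s := F) (Disjoint · S)
  simp only [not_disjoint_iff_nonempty_inter] at hmissed_or_met
  calc 2 * ℓ * (2 ^ k * #{e ∈ F | (e ∩ S).Nonempty} + #F)
      = 2 * ℓ * (2 ^ k * #{e ∈ F | (e ∩ S).Nonempty} + #{e ∈ F | ¬∃ v ∈ e, p v ∈ e}) +
          2 * ℓ * #{e ∈ F | ∃ v ∈ e, p v ∈ e} := by rw [← hpair_or_not]; ring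
    _ ≤ 2 * ℓ * (2 ^ k * #{e ∈ F | (e ∩ S).Nonempty} + 2 ^ k * #{e ∈ F | Disjoint e S}) +
          q * k * #F := by
      gcongr
      exact hmissed.trans (Nat.mul_le_mul_left _ hmono)
    _ = (2 * ℓ * 2 ^ k + q * k) * #F := by rw [← hmissed_or_met]; ring

end Counting

/-- Rhombus game on the triangular grid (`k = 4`, `ℓ = 12`, `q = 2`), threshold `s = 1`:
for every pairing `p` there is a transversal `S` such that the number of `e ∈ F` meeting
`S` is at most `23n/24`. -/
theorem rhombus_s1_pairing_upper {V : Type*} [Fintype V] [DecidableEq V]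
    (n : ℕ) (F : Finset (Finset V)) (hn : F.card = n)
    (hF : ∀ e ∈ F, e.card = 4)
    (hdeg : ∀ v : V, (F.filter (fun e => v ∈ e)).card = 12)
    (hpair : ∀ u v : V, u ≠ v → (F.filter (fun e => u ∈ e ∧ v ∈ e)).card ≤ 2)
    (p : V → V) (hp_inv : ∀ v, p (p v) = v) (hp_ne : ∀ v, p v ≠ v) :
    ∃ S : Finset V, (∀ v, v ∈ S ↔ p v ∉ S) ∧
      24 * (F.filter (fun e => (e ∩ S).Nonempty)).card ≤ 23 * n := by
  obtain ⟨S, hS, hcard⟩ := rhombus_s1_pairing_upper_general hp_inv hp_ne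
    (fun e he ↦ (hF e he).le) (fun v ↦ (hdeg v).ge) (fun v ↦ hpair v (p v) (hp_ne v).symm)
  exact ⟨S, hS, by omega⟩
end

section
/- Let V be a finite set and F a finite family of n three-element subsets of V. Then for every pairing p of V there exists a transversal S of p such that the number of e ∈ F with |e ∩ S| ≥ 2 is at most n/2, i.e., 2·|{e ∈ F : |e ∩ S| ≥ 2}| ≤ n. -/
open Finset

/-!
If `S` is a transversal of a pairing, then so is `Sᶜ`. A set with fewer than `2 * t` elements
cannot meet both of them in `t` or more elements, so the families counted for `S` and for `Sᶜ` are
disjoint and the smaller one contains at most half of `F`.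
-/

section Pairing

variable {V : Type*} {p : V → V} {S : Set V} {F : Finset (Finset V)} {t : ℕ}

/-- `S` is a transversal of `p`. When `p` is a pairing, that is, a fixed-point-free involution,
this says that `S` contains exactly one element of each pair `{v, p v}`. -/
def IsTransversal (p : V → V) (S : Set V) : Prop :=
  ∀ v, v ∈ S ↔ p v ∉ S

theorem IsTransversal.compl (hS : IsTransversal p S) : IsTransversal p Sᶜ :=
  fun v => not_congr (hS v)

theorem exists_isTransversal (hp_inv : Function.Involutive p) (hp_ne : ∀ v, p v ≠ v) :
    ∃ S, IsTransversal p S := by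
  obtain ⟨_, -⟩ := exists_wellFoundedLT V
  refine ⟨{v | v < p v}, fun v => ?_⟩
  simp only [Set.mem_ofPred_eq, hp_inv v, not_lt]
  exact (hp_ne v).symm.le_iff_lt.symm

/-- The members of the family `F` that are heavy with respect to `S`: those with at least `t` of
their elements in `S`. The set `S` may be infinite, but `↑e ∩ S` is finite, so `Set.ncard` is its
true size. -/
noncomputable def heavyMembers (F : Finset (Finset V)) (t : ℕ) (S : Set V) : Finset (Finset V) :=
  F.filter fun e => t ≤ (↑e ∩ S).ncard

theorem heavyMembers_subset : heavyMembers F t S ⊆ F :=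
  filter_subset _ _

theorem ncard_inter_compl_lt_of_le_ncard_inter {e : Finset V} (he : #e < 2 * t)
    (h : t ≤ (↑e ∩ S).ncard) : (↑e ∩ Sᶜ).ncard < t := by
  have hsum := Set.ncard_inter_add_ncard_sdiff_eq_ncard (e : Set V) S e.finite_toSet
  rw [Set.sdiff_eq, Set.ncard_coe_finset] at hsum
  lia

theorem disjoint_heavyMembers_compl (hF : ∀ e ∈ F, #e < 2 * t) :
    Disjoint (heavyMembers F t S) (heavyMembers F t Sᶜ) :=
  disjoint_filter.2 fun e he h => (ncard_inter_compl_lt_of_le_ncard_inter (hF e he) h).not_ge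

theorem card_heavyMembers_add_card_heavyMembers_compl_le (hF : ∀ e ∈ F, #e < 2 * t) :
    #(heavyMembers F t S) + #(heavyMembers F t Sᶜ) ≤ #F := by
  classical
  rw [← card_union_of_disjoint (disjoint_heavyMembers_compl hF)]
  exact card_le_card (union_subset heavyMembers_subset heavyMembers_subset)

theorem triangle_s2_pairing_upper_general (hF : ∀ e ∈ F, #e < 2 * t)
    (hp_inv : Function.Involutive p) (hp_ne : ∀ v, p v ≠ v) :
    ∃ S, IsTransversal p S ∧ 2 * #(heavyMembers F t S) ≤ #F := by
  obtain ⟨S, hS⟩ := exists_isTransversal hp_inv hp_ne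
  have hsum : #(heavyMembers F t S) + #(heavyMembers F t Sᶜ) ≤ #F :=
    card_heavyMembers_add_card_heavyMembers_compl_le hF
  rcases le_total #(heavyMembers F t S) #(heavyMembers F t Sᶜ) with hle | hle
  · exact ⟨S, hS, by lia⟩
  · exact ⟨Sᶜ, hS.compl, by lia⟩

end Pairing

/-- For any family `F` of `n` three-element subsets of a finite set `V` and any pairing
`p` of `V`, there is a transversal `S` of `p` such that the number of `e ∈ F` with
`|e ∩ S| ≥ 2` is at most `n/2`. -/
theorem triangle_s2_pairing_upper {V : Type*} [Fintype V] [DecidableEq V]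
    (n : ℕ) (F : Finset (Finset V)) (hn : F.card = n)
    (hF : ∀ e ∈ F, e.card = 3)
    (p : V → V) (hp_inv : ∀ v, p (p v) = v) (hp_ne : ∀ v, p v ≠ v) :
    ∃ S : Finset V, (∀ v, v ∈ S ↔ p v ∉ S) ∧
      2 * (F.filter (fun e => 2 ≤ (e ∩ S).card)).card ≤ n := by
  obtain ⟨S, hS, hle⟩ := triangle_s2_pairing_upper_general (F := F) (t := 2)
    (fun e he => by simp [hF e he]) hp_inv hp_ne
  lift S to Finset V using S.toFinite
  exact ⟨S, hS, by simpa only [heavyMembers, ← coe_inter, Set.ncard_coe_finset, hn] using hle⟩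
end
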